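/- Let L be a 2-trivial Lie algebra over a field K of characteristic zero, and let Rad(L) denote its solvable radical. Then H^2(Rad(L), K) = 0, where K is the trivial one-dimensional Rad(L)-module. -/

import Mathlib

universe u v

section TwoCohomology

variable (K : Type u) [Field K]
variable (L : Type v) [LieRing L] [LieAlgebra K L]

/-- `f` is an alternating bilinear 2-cocycle on `L` with values in the `L`-module `V`:
it satisfies `f a a = 0` and the Chevalley–Eilenberg 2-cocycle identity. -/
def IsLieTwoCocycle {V : Type*} [AddCommGroup V] [Module K V] [LieRingModule L V]
    (f : L →ₗ[K] L →ₗ[K] V) : Prop :=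
  (∀ a : L, f a a = 0) ∧
    ∀ x y z : L,
      ⁅x, f y z⁆ - ⁅y, f x z⁆ + ⁅z, f x y⁆ - f ⁅x, y⁆ z + f ⁅x, z⁆ y - f ⁅y, z⁆ x = 0

/-- `f` is a 2-coboundary: `f (x, y) = x · g y − y · g x − g ⁅x, y⁆` for some linear `g`. -/
def IsLieTwoCoboundary {V : Type*} [AddCommGroup V] [Module K V] [LieRingModule L V]
    (f : L →ₗ[K] L →ₗ[K] V) : Prop :=
  ∃ g : L →ₗ[K] V, ∀ x y : L, f x y = ⁅x, g y⁆ - ⁅y, g x⁆ - g ⁅x, y⁆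

/-- A finite-dimensional Lie algebra `L` is 2-trivial if `H²(L,V) = 0`, i.e. every
alternating 2-cocycle is a 2-coboundary, for every finite-dimensional `L`-module `V`. -/
def IsTwoTrivial : Prop :=
  ∀ (V : Type u) [AddCommGroup V] [Module K V] [LieRingModule L V] [LieModule K L V]
    [FiniteDimensional K V] (f : L →ₗ[K] L →ₗ[K] V),
      IsLieTwoCocycle K L f → IsLieTwoCoboundary K L f

end TwoCohomology

/-!
Write `R` for the radical of `L`. The tautological cocycle of `R` with values in the dual of the
`L`-module `Z²(R, K)` is `L`-equivariant, and every scalar cocycle is an evaluation of it. A Levi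
splitting `L = R ⊕ σ(L/R)` lets `L` act on this dual through `σ(L/R)`; composing the tautological
cocycle with the projection `L → R` then gives a 2-cocycle of `L`. It is a coboundary because `L`
is 2-trivial, and since `R` acts by zero, restricting to `R` shows that the tautological cocycle
is `g ⁅·, ·⁆` for a linear map `g`.

For the Levi splitting it suffices to find a proper subalgebra mapping onto the semisimple quotient
when the kernel `A` is nonzero and, after dividing by `⁅A, A⁆`, abelian. Weyl's theorem, proved with
Casimir operators, gives a linear retraction `ψ : L → A` with `⁅L, ψ⁆ = ⁅A, ψ⁆`, so the stabilizer
of `ψ` maps onto the quotient; if the stabilizer is all of `L`, then `ψ` is `L`-linear and its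
kernel is a complement of `A`.
-/

attribute [local instance 100] LieRing.ofAssociativeRing

open LieAlgebra LieModule

section Solvable

variable {R L L' S : Type*} [CommRing R] [LieRing L] [LieAlgebra R L] [LieRing L'] [LieAlgebra R L']
  [LieRing S] [LieAlgebra R S]

theorem isSolvable_of_isSolvable_ker (f : L →ₗ⁅R⁆ L') [IsSolvable L'] [IsSolvable f.ker] :
    IsSolvable L := by
  obtain ⟨k, hk⟩ := IsSolvable.solvable R L'
  obtain ⟨l, hl⟩ := IsSolvable.solvable R f.ker
  rw [LieIdeal.derivedSeries_eq_bot_iff] at hl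
  have derivedSeries_le_ker : derivedSeries R L k ≤ f.ker := by
    rw [← LieIdeal.map_eq_bot_iff, eq_bot_iff, ← hk]
    exact LieIdeal.derivedSeries_map_le k
  refine IsSolvable.mk (R := R) (k := l + k) ?_
  rw [derivedSeries_def, derivedSeriesOfIdeal_add, eq_bot_iff, ← hl]
  exact derivedSeriesOfIdeal_mono derivedSeries_le_ker l

theorem lie_self_ne_self_of_isSolvable {I : LieIdeal R L} [IsSolvable I] (hI : I ≠ ⊥) :
    ⁅I, I⁆ ≠ I := by
  intro h
  have derivedSeries_eq (k : ℕ) : derivedSeriesOfIdeal R L k I = I := by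
    induction k with
    | zero => rfl
    | succ k ih => rw [derivedSeriesOfIdeal_succ, ih, h]
  obtain ⟨k, hk⟩ := IsSolvable.solvable R I
  rw [LieIdeal.derivedSeries_eq_bot_iff, derivedSeries_eq] at hk
  exact hI hk

theorem isSolvable_ker_comp_of_injective {f : L →ₗ⁅R⁆ L'} (hf : Function.Injective f)
    (π : L' →ₗ⁅R⁆ S) [IsSolvable π.ker] : IsSolvable (π.comp f).ker := by
  let j : (π.comp f).ker →ₗ⁅R⁆ π.ker :=
    { toFun := fun x ↦ ⟨f x, x.2⟩
      map_add' := fun _ _ ↦ Subtype.ext (map_add f _ _)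
      map_smul' := fun _ _ ↦ Subtype.ext (map_smul f _ _)
      map_lie' := Subtype.ext (f.map_lie _ _) }
  exact Function.Injective.lieAlgebra_isSolvable (R := R) (f := j) fun x y h ↦
    Subtype.ext (hf (congrArg Subtype.val h))

theorem isSolvable_comap (π : L →ₗ⁅R⁆ S) [IsSolvable π.ker] (I : LieIdeal R S) [IsSolvable I] :
    IsSolvable (I.comap π) := by
  let f : I.comap π →ₗ⁅R⁆ I :=
    { toFun := fun x ↦ ⟨π x, LieIdeal.mem_comap.mp x.2⟩
      map_add' := fun _ _ ↦ Subtype.ext (map_add π _ _)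
      map_smul' := fun _ _ ↦ Subtype.ext (map_smul π _ _)
      map_lie' := Subtype.ext (π.map_lie _ _) }
  have ker_f : f.ker = (π.comp (I.comap π).incl).ker := by
    ext x
    exact Subtype.ext_iff
  have : IsSolvable f.ker := ker_f ▸ isSolvable_ker_comp_of_injective Subtype.val_injective π
  exact isSolvable_of_isSolvable_ker f

end Solvable

section Quotient

variable {R L L' S : Type*} [CommRing R] [LieRing L] [LieAlgebra R L] [LieRing L'] [LieAlgebra R L']
  [LieRing S] [LieAlgebra R S]

/-- The projection onto the quotient by an ideal as a morphism of Lie algebras; Mathlib's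
`LieSubmodule.Quotient.mk'` is only a morphism of Lie modules. -/
def quotientMk (I : LieIdeal R L) : L →ₗ⁅R⁆ L ⧸ I :=
  { LieSubmodule.Quotient.mk' I with
    map_lie' := fun {x y} ↦ LieSubmodule.Quotient.mk_bracket I x y }

theorem quotientMk_surjective (I : LieIdeal R L) : Function.Surjective (quotientMk I) :=
  LieSubmodule.Quotient.surjective_mk' I

theorem ker_quotientMk (I : LieIdeal R L) : (quotientMk I).ker = I := by
  ext x
  exact LieSubmodule.Quotient.mk_eq_zero (N := I)

theorem exists_lieHom_comp_eq {π : L →ₗ⁅R⁆ S} (hπ : Function.Surjective π) {f : L →ₗ⁅R⁆ L'}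
    (h : π.ker ≤ f.ker) : ∃ g : S →ₗ⁅R⁆ L', ∀ x, g (π x) = f x := by
  have apply_surjInv {x : L} {s : S} (hx : π x = s) : f (Function.surjInv hπ s) = f x := by
    rw [← sub_eq_zero, ← map_sub]
    refine h (LieHom.mem_ker.mpr ?_)
    rw [map_sub, Function.surjInv_eq hπ, hx, sub_self]
  refine ⟨{ toFun := fun s ↦ f (Function.surjInv hπ s), map_add' := ?_, map_smul' := ?_,
            map_lie' := ?_ }, fun x ↦ apply_surjInv rfl⟩
  · intro s t
    rw [← map_add]
    exact apply_surjInv (by simp only [map_add, Function.surjInv_eq hπ])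
  · intro c s
    rw [RingHom.id_apply, ← map_smul]
    exact apply_surjInv (by simp only [map_smul, Function.surjInv_eq hπ])
  · intro s t
    rw [← LieHom.map_lie]
    exact apply_surjInv (by simp only [LieHom.map_lie, Function.surjInv_eq hπ])

theorem isLieAbelian_ker_of_lie_ker_le_ker {p : L →ₗ⁅R⁆ L'} (hp : Function.Surjective p)
    {π : L →ₗ⁅R⁆ S} {π' : L' →ₗ⁅R⁆ S} (h : ∀ x, π' (p x) = π x) (hle : ⁅π.ker, π.ker⁆ ≤ p.ker) :
    IsLieAbelian π'.ker := by
  refine ⟨?_⟩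
  rintro ⟨a, ha⟩ ⟨b, hb⟩
  obtain ⟨x, rfl⟩ := hp a
  obtain ⟨y, rfl⟩ := hp b
  rw [LieHom.mem_ker, h, ← LieHom.mem_ker] at ha hb
  exact Subtype.ext ((p.map_lie x y).symm.trans (hle (LieSubmodule.lie_mem_lie ha hb)))

instance hasTrivialRadical_quotient_radical [IsNoetherian R L] :
    HasTrivialRadical R (L ⧸ radical R L) := by
  refine hasTrivialRadical_of_no_solvable_ideals fun I _ ↦ ?_
  have : IsSolvable (quotientMk (radical R L)).ker := by
    rw [ker_quotientMk]
    infer_instance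
  have comap_le := (LieIdeal.solvable_iff_le_radical R L _).mp
    (isSolvable_comap (quotientMk (radical R L)) I)
  refine (LieSubmodule.eq_bot_iff _).mpr fun s hs ↦ ?_
  obtain ⟨x, rfl⟩ := quotientMk_surjective _ s
  rw [← LieHom.mem_ker, ker_quotientMk]
  exact comap_le (LieIdeal.mem_comap.mpr hs)

end Quotient

section TraceForm

variable {K L M : Type*} [Field K] [LieRing L] [LieAlgebra K L]
  [AddCommGroup M] [Module K M] [LieRingModule L M] [LieModule K L M]

theorem isNilpotent_of_isFaithful [FiniteDimensional K M] [IsFaithful K L M]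
    [LieModule.IsNilpotent L M] : LieRing.IsNilpotent L := by
  have isNilpotent_range : LieRing.IsNilpotent (toEnd K L M).range := by
    rw [LieAlgebra.isNilpotent_iff_forall (R := K)]
    rintro ⟨_, x, rfl⟩
    exact LieAlgebra.isNilpotent_ad_of_isNilpotent (isNilpotent_toEnd_of_isNilpotent K L M x)
  exact Function.Injective.lieAlgebra_isNilpotent (f := (toEnd K L M).rangeRestrict)
    fun x y h ↦ IsFaithful.injective_toEnd (congrArg Subtype.val h)

theorem isSolvable_of_traceForm_eq_zero [CharZero K] [FiniteDimensional K M]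
    [IsFaithful K L M] (h : traceForm K L M = 0) : IsSolvable L := by
  have : LieModule.IsNilpotent (derivedSeries K L 1) M :=
    isNilpotent_derivedSeries_of_traceForm_eq_zero (R := K) h
  have : IsFaithful K (derivedSeries K L 1) M :=
    inferInstanceAs (IsFaithful K (derivedSeries K L 1).toLieSubalgebra M)
  have : LieRing.IsNilpotent (derivedSeries K L 1) := isNilpotent_of_isFaithful (K := K) (M := M)
  obtain ⟨k, hk⟩ := IsSolvable.solvable K (derivedSeries K L 1)
  rw [LieIdeal.derivedSeries_eq_bot_iff] at hk
  refine IsSolvable.mk (R := K) (k := k + 1) ?_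
  rwa [derivedSeries_def, derivedSeriesOfIdeal_add]

end TraceForm

section Casimir

variable {K L M : Type*} [Field K] [LieRing L] [LieAlgebra K L]
  [AddCommGroup M] [Module K M] [LieRingModule L M] [LieModule K L M]

theorem bilin_dualBasis_apply {V ι : Type*} [AddCommGroup V] [Module K V] [Finite ι]
    [DecidableEq ι] {B : LinearMap.BilinForm K V} (hB : B.Nondegenerate) (b : Module.Basis ι K V)
    (i : ι) (v : V) : B (B.dualBasis hB b i) v = b.repr v i := by
  have := B.flip.dualBasis_repr_apply hB.flip (B.dualBasis hB b) v i
  rwa [B.dualBasis_flip_dualBasis, eq_comm] at this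

theorem sum_lie_basis_lie_dualBasis {ι : Type*} [Fintype ι] [DecidableEq ι]
    {J : LieIdeal K L} {B : LinearMap.BilinForm K J} (hB : B.Nondegenerate)
    (hinv : B.lieInvariant L) (b : Module.Basis ι K J) (x : L) (m : M) :
    ∑ i, ⁅⁅x, b i⁆, ⁅B.dualBasis hB b i, m⁆⁆ = - ∑ i, ⁅b i, ⁅⁅x, B.dualBasis hB b i⁆, m⁆⁆ := by
  set d := B.dualBasis hB b
  have lie_basis (i) : ⁅x, b i⁆ = ∑ j, B (d j) ⁅x, b i⁆ • b j := by
    simp_rw [d, bilin_dualBasis_apply, b.sum_repr]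
  have lie_dualBasis (j) : ⁅x, d j⁆ = - ∑ i, B (d j) ⁅x, b i⁆ • d i := by
    simp_rw [← Finset.sum_neg_distrib, ← neg_smul, ← hinv x, d, ← B.dualBasis_repr_apply hB b,
      Module.Basis.sum_repr]
  calc ∑ i, ⁅⁅x, b i⁆, ⁅d i, m⁆⁆
    _ = ∑ i, ∑ j, B (d j) ⁅x, b i⁆ • ⁅b j, ⁅d i, m⁆⁆ := by
      refine Finset.sum_congr rfl fun i _ ↦ ?_
      conv_lhs => rw [lie_basis i]
      simp only [sum_lie, smul_lie]
    _ = ∑ j, ∑ i, B (d j) ⁅x, b i⁆ • ⁅b j, ⁅d i, m⁆⁆ := Finset.sum_comm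
    _ = - ∑ j, ⁅b j, ⁅⁅x, d j⁆, m⁆⁆ := by
      simp only [lie_dualBasis, neg_lie, sum_lie, smul_lie, lie_neg, lie_sum, lie_smul,
        Finset.sum_neg_distrib, neg_neg]

variable {J : LieIdeal K L} [FiniteDimensional K J] {B : LinearMap.BilinForm K J}

variable (M) in
/-- The Casimir operator on `M` of a nondegenerate bilinear form `B` on an ideal `J`: the sum of
`bᵢ dᵢ` over a basis `b` of `J` and its `B`-dual basis `d`. It does not depend on the basis; we take
an arbitrary one. -/
noncomputable def casimir (hB : B.Nondegenerate) : Module.End K M :=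
  ∑ i, toEnd K J M (Module.finBasis K J i) *
    toEnd K J M (B.dualBasis hB (Module.finBasis K J) i)

theorem casimir_apply (hB : B.Nondegenerate) (m : M) :
    casimir M hB m = ∑ i, ⁅Module.finBasis K J i,
      ⁅B.dualBasis hB (Module.finBasis K J) i, m⁆⁆ := by
  simp [casimir]

theorem casimir_lie (hB : B.Nondegenerate) (hinv : B.lieInvariant L) (x : L) (m : M) :
    casimir M hB ⁅x, m⁆ = ⁅x, casimir M hB m⁆ := by
  have leibniz_coe (y : J) (n : M) : ⁅x, ⁅y, n⁆⁆ = ⁅⁅x, y⁆, n⁆ + ⁅y, ⁅x, n⁆⁆ :=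
    leibniz_lie x (y : L) n
  simp only [casimir_apply, lie_sum, leibniz_coe, lie_add, Finset.sum_add_distrib,
    sum_lie_basis_lie_dualBasis hB hinv, neg_add_cancel_left]

theorem casimir_apply_mem (hB : B.Nondegenerate) (m : M) :
    casimir M hB m ∈ ⁅(⊤ : LieIdeal K L), (⊤ : LieSubmodule K L M)⁆ := by
  rw [casimir_apply]
  exact sum_mem fun i _ ↦ LieSubmodule.lie_mem_lie (LieSubmodule.mem_top _) (LieSubmodule.mem_top _)

theorem trace_casimir (hB : ((traceForm K L M).restrict J.toSubmodule).Nondegenerate) :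
    LinearMap.trace K M (casimir M hB) = Module.finrank K J := by
  have hsymm : ((traceForm K L M).restrict J.toSubmodule).IsSymm :=
    ⟨fun x y ↦ traceForm_comm K L M x y⟩
  have trace_summand (i) : LinearMap.trace K M (toEnd K J M (Module.finBasis K J i) *
      toEnd K J M (LinearMap.BilinForm.dualBasis _ hB (Module.finBasis K J) i)) = 1 :=
    (LinearMap.BilinForm.apply_dualBasis_right hB hsymm _ i i).trans (if_pos rfl)
  simp [casimir, trace_summand]

theorem exists_isCompl_ker_traceForm_restrict_nondegenerate [CharZero K] [FiniteDimensional K L]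
    [HasTrivialRadical K L] [FiniteDimensional K M] :
    ∃ J : LieIdeal K L, IsCompl (LieModule.ker K L M) J ∧
      ((traceForm K L M).restrict J.toSubmodule).Nondegenerate := by
  obtain ⟨J, hJ⟩ := exists_isCompl (LieModule.ker K L M)
  refine ⟨J, hJ, LinearMap.BilinForm.nondegenerate_restrict_of_disjoint_orthogonal _
    (traceForm_isSymm K L M).isRefl ?_⟩
  let N : LieIdeal K L :=
    J ⊓ InvariantForm.orthogonal _ (traceForm_lieInvariant K L M) J
  have mem_orthogonal (x : N) (y : L) (hy : y ∈ J) : traceForm K L M y x = 0 :=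
    (InvariantForm.mem_orthogonal _ _ _ _).mp x.2.2 y hy
  have : IsFaithful K N M := by
    refine (isFaithful_iff' K N M).mpr fun x hx ↦ Subtype.ext ?_
    have : (x : L) ∈ LieModule.ker K L M ⊓ J := ⟨(LieModule.mem_ker _ _ _ _).mpr hx, x.2.1⟩
    simpa [hJ.inf_eq_bot] using this
  have : IsSolvable N :=
    isSolvable_of_traceForm_eq_zero (K := K) (M := M) <| by
      ext x y; exact mem_orthogonal y x x.2.1
  have hN : N = ⊥ := HasTrivialRadical.eq_bot_of_isSolvable N
  exact disjoint_iff.mpr (congrArg LieSubmodule.toSubmodule hN)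

end Casimir

section Weyl

variable {K S M : Type*} [Field K] [CharZero K] [LieRing S] [LieAlgebra K S]
  [FiniteDimensional K S] [HasTrivialRadical K S]
  [AddCommGroup M] [Module K M] [LieRingModule S M] [LieModule K S M] [FiniteDimensional K M]

variable (K) in
theorem exists_commute_toEnd_trace_ne_zero (h : ¬ IsTrivial S M) :
    ∃ C : Module.End K M, (∀ x, Commute C (toEnd K S M x)) ∧
      (∀ m, C m ∈ ⁅(⊤ : LieIdeal K S), (⊤ : LieSubmodule K S M)⁆) ∧
      LinearMap.trace K M C ≠ 0 := by
  obtain ⟨J, hJ, hB⟩ :=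
    exists_isCompl_ker_traceForm_restrict_nondegenerate (K := K) (L := S) (M := M)
  have J_ne_bot : J ≠ ⊥ := by
    rintro rfl
    have ker_eq_top : LieModule.ker K S M = ⊤ := by simpa using hJ.sup_eq_top
    exact h ⟨fun x m ↦ (LieModule.mem_ker K S M x).mp (ker_eq_top ▸ LieSubmodule.mem_top x) m⟩
  have casimir_lie_trace (x : S) (m : M) : casimir M hB ⁅x, m⁆ = ⁅x, casimir M hB m⁆ :=
    casimir_lie hB (fun x y z ↦ traceForm_lieInvariant K S M x y z) x m
  refine ⟨casimir M hB, fun x ↦ LinearMap.ext (casimir_lie_trace x), casimir_apply_mem hB, ?_⟩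
  rw [trace_casimir, Nat.cast_ne_zero]
  exact fun hJ0 ↦ J_ne_bot (by simpa using Submodule.finrank_eq_zero.mp hJ0)

theorem exists_lieSubmodule_lt_top_sup_eq_top (h : ¬ IsTrivial S M) :
    ∃ P < (⊤ : LieSubmodule K S M), P ⊔ ⁅(⊤ : LieIdeal K S), (⊤ : LieSubmodule K S M)⁆ = ⊤ := by
  obtain ⟨C, hcomm, hC, htr⟩ := exists_commute_toEnd_trace_ne_zero K h
  have not_isNilpotent : ¬ IsNilpotent C := fun hnil ↦
    htr (LinearMap.isNilpotent_trace_of_isNilpotent hnil).eq_zero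
  obtain ⟨k, hk⟩ := Filter.eventually_atTop.mp C.eventually_isCompl_ker_pow_range_pow
  have isCompl_ker_range := hk (k + 1) k.le_succ
  let P : LieSubmodule K S M :=
    { LinearMap.ker (C ^ (k + 1)) with
      lie_mem := fun {x m} (hm : (C ^ (k + 1)) m = 0) ↦ by
        have := LinearMap.congr_fun ((hcomm x).pow_left (k + 1)) m
        simpa [hm] using this }
  refine ⟨P, lt_top_iff_ne_top.mpr fun hP ↦ not_isNilpotent ⟨k + 1, ?_⟩, ?_⟩
  · exact LinearMap.ker_eq_top.mp (congrArg LieSubmodule.toSubmodule hP)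
  · rw [← LieSubmodule.toSubmodule_inj, LieSubmodule.sup_toSubmodule,
      LieSubmodule.top_toSubmodule, eq_top_iff, ← isCompl_ker_range.sup_eq_top]
    refine sup_le_sup_left ?_ _
    rintro _ ⟨m, rfl⟩
    rw [pow_succ']
    exact hC _

theorem maxTrivSubmodule_sup_lie_top_eq_top :
    maxTrivSubmodule K S M ⊔ ⁅(⊤ : LieIdeal K S), (⊤ : LieSubmodule K S M)⁆ = ⊤ := by
  have := LieSubmodule.wellFoundedLT_of_isArtinian K S M
  obtain ⟨P, hP, hmin⟩ := (wellFounded_lt (α := LieSubmodule K S M)).has_min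
    {P | P ⊔ ⁅(⊤ : LieIdeal K S), (⊤ : LieSubmodule K S M)⁆ = ⊤} ⟨⊤, top_sup_eq _⟩
  have isTrivial : IsTrivial S P := by
    by_contra h
    obtain ⟨Q, hQ, hQ_sup⟩ := exists_lieSubmodule_lt_top_sup_eq_top (K := K) h
    have P_eq : Q.map P.incl ⊔ ⁅(⊤ : LieIdeal K S), P⁆ = P := by
      simpa [LieSubmodule.map_sup, LieSubmodule.map_bracket_eq] using
        congrArg (LieSubmodule.map P.incl) hQ_sup
    refine hmin (Q.map P.incl) ?_ (LieSubmodule.map_incl_lt_iff_lt_top.mpr hQ)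
    have lie_P_le := LieSubmodule.mono_lie_right (⊤ : LieIdeal K S) (le_top : P ≤ ⊤)
    rw [Set.mem_ofPred_eq, ← sup_eq_right.mpr lie_P_le, ← sup_assoc, P_eq, hP]
  exact top_unique <| hP.ge.trans <|
    sup_le_sup_right ((trivial_iff_le_maximal_trivial K S M P).mp isTrivial) _

end Weyl

section RelativeWeyl

variable {K L S M : Type*} [Field K] [CharZero K] [LieRing L] [LieAlgebra K L] [LieRing S]
  [LieAlgebra K S] [FiniteDimensional K S] [HasTrivialRadical K S]
  [AddCommGroup M] [Module K M] [LieRingModule L M] [LieModule K L M] [FiniteDimensional K M]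

theorem maxTrivSubmodule_sup_lie_top_eq_top_of_ker_le {π : L →ₗ⁅K⁆ S}
    (hπ : Function.Surjective π) (h : π.ker ≤ LieModule.ker K L M) :
    maxTrivSubmodule K L M ⊔ ⁅(⊤ : LieIdeal K L), (⊤ : LieSubmodule K L M)⁆ = ⊤ := by
  obtain ⟨ρ, hρ⟩ := exists_lieHom_comp_eq hπ (f := toEnd K L M) h
  let _ : LieRingModule S M := LieRingModule.compLieHom M ρ
  have : LieModule K S M := LieModule.compLieHom M ρ
  have map_lie (x : L) (m : M) : ⁅π x, m⁆ = ⁅x, m⁆ := LinearMap.congr_fun (hρ x) m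
  have lie_top_le : ⁅(⊤ : LieIdeal K S), (⊤ : LieSubmodule K S M)⁆.toSubmodule ≤
      ⁅(⊤ : LieIdeal K L), (⊤ : LieSubmodule K L M)⁆.toSubmodule := by
    rw [LieSubmodule.lieIdeal_oper_eq_linear_span', Submodule.span_le]
    rintro _ ⟨s, -, m, -, rfl⟩
    obtain ⟨x, rfl⟩ := hπ s
    rw [map_lie]
    exact LieSubmodule.lie_mem_lie (LieSubmodule.mem_top x) (LieSubmodule.mem_top m)
  refine eq_top_iff.mpr fun m _ ↦ ?_
  have hm : m ∈ maxTrivSubmodule K S M ⊔ ⁅(⊤ : LieIdeal K S), (⊤ : LieSubmodule K S M)⁆ := by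
    rw [maxTrivSubmodule_sup_lie_top_eq_top]
    exact LieSubmodule.mem_top m
  obtain ⟨t, ht, c, hc, rfl⟩ := LieSubmodule.mem_sup _ _ m |>.mp hm
  exact LieSubmodule.mem_sup _ _ _ |>.mpr
    ⟨t, fun x ↦ map_lie x t ▸ ht (π x), c, lie_top_le hc, rfl⟩

theorem normalizer_sup_lie_top_eq_top {π : L →ₗ⁅K⁆ S} (hπ : Function.Surjective π)
    {P : LieSubmodule K L M} (h : ⁅π.ker, (⊤ : LieSubmodule K L M)⁆ ≤ P) :
    P.normalizer ⊔ ⁅(⊤ : LieIdeal K L), (⊤ : LieSubmodule K L M)⁆ = ⊤ := by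
  have ker_le : π.ker ≤ LieModule.ker K L (M ⧸ P) := by
    intro x hx
    rw [LieModule.mem_ker]
    intro q
    obtain ⟨m, rfl⟩ := LieSubmodule.Quotient.surjective_mk' P q
    rw [← LieModuleHom.map_lie, LieSubmodule.Quotient.mk_eq_zero]
    exact h (LieSubmodule.lie_mem_lie hx (LieSubmodule.mem_top m))
  have : FiniteDimensional K (M ⧸ P) := inferInstanceAs (FiniteDimensional K (M ⧸ P.toSubmodule))
  have comap_maxTriv :
      (maxTrivSubmodule K L (M ⧸ P)).comap (LieSubmodule.Quotient.mk' P) = P.normalizer := by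
    rw [← LieSubmodule.normalizer_bot_eq_maxTrivSubmodule, LieSubmodule.comap_normalizer]
    congr 1
    ext m
    simp
  have lie_top_quotient : ⁅(⊤ : LieIdeal K L), (⊤ : LieSubmodule K L (M ⧸ P))⁆ =
      ⁅(⊤ : LieIdeal K L), (⊤ : LieSubmodule K L M)⁆.map (LieSubmodule.Quotient.mk' P) := by
    rw [LieSubmodule.map_bracket_eq, LieModuleHom.map_top, LieSubmodule.Quotient.range_mk']
  refine eq_top_iff.mpr fun m _ ↦ ?_
  have hm : LieSubmodule.Quotient.mk' P m ∈ maxTrivSubmodule K L (M ⧸ P) ⊔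
      ⁅(⊤ : LieIdeal K L), (⊤ : LieSubmodule K L (M ⧸ P))⁆ := by
    rw [maxTrivSubmodule_sup_lie_top_eq_top_of_ker_le hπ ker_le]
    exact LieSubmodule.mem_top _
  rw [lie_top_quotient] at hm
  obtain ⟨t, ht, _, ⟨c, hc, rfl⟩, htc⟩ := LieSubmodule.mem_sup _ _ _ |>.mp hm
  refine LieSubmodule.mem_sup _ _ _ |>.mpr ⟨m - c, ?_, c, hc, sub_add_cancel m c⟩
  rw [← comap_maxTriv, LieSubmodule.mem_comap, map_sub, ← htc]
  simpa using ht

end RelativeWeyl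

section OneCochains

variable {R L V : Type*} [CommRing R] [LieRing L] [LieAlgebra R L]
  [AddCommGroup V] [Module R V] [LieRingModule L V] [LieModule R L V]

variable (R L V) in
/-- The differential of 0-cochains, sending `v` to the 1-cochain `x ↦ ⁅x, v⁆`. -/
def zeroDifferential : V →ₗ⁅R, L⁆ (L →ₗ[R] V) where
  toLinearMap := (toEnd R L V : L →ₗ[R] Module.End R V).flip
  map_lie' {x v} := by
    ext y
    simp

theorem zeroDifferential_apply (v : V) (x : L) : zeroDifferential R L V v x = ⁅x, v⁆ := rfl

theorem lie_apply_eq_zero_of_apply_eq_smul {A : LieIdeal R L} {φ : L →ₗ[R] A} {c : R}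
    (hφ : ∀ a : A, φ a = c • a) (x : L) (a : A) : ⁅x, φ⁆ a = 0 := by
  have := hφ ⁅x, a⁆
  rw [LieSubmodule.coe_bracket] at this
  rw [LieHom.lie_apply, this, hφ, lie_smul, sub_self]

variable (R) in
/-- The subalgebra of the elements of `L` which annihilate `v`. -/
def lieStabilizer (v : V) : LieSubalgebra R L where
  __ := LinearMap.ker (zeroDifferential R L V v)
  lie_mem' {x y} (hx : ⁅x, v⁆ = 0) (hy : ⁅y, v⁆ = 0) := by
    change ⁅⁅x, y⁆, v⁆ = 0
    rw [lie_lie, hx, hy, lie_zero, lie_zero, sub_zero]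

theorem mem_lieStabilizer {v : V} {x : L} : x ∈ lieStabilizer R v ↔ ⁅x, v⁆ = 0 := Iff.rfl

variable (A : LieIdeal R L)

/-- The linear maps from a Lie algebra to an ideal `A` which restrict to a scalar on `A`. Modulo the
image of `zeroDifferential`, this is the module in which Weyl's theorem finds an invariant
retraction onto `A`. -/
def scalarOnIdeal : LieSubmodule R L (L →ₗ[R] A) where
  carrier := {φ | ∃ c : R, ∀ a : A, φ a = c • a}
  add_mem' := by
    rintro φ ψ ⟨c, hφ⟩ ⟨d, hψ⟩
    exact ⟨c + d, fun a ↦ by rw [LinearMap.add_apply, hφ, hψ, add_smul]⟩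
  zero_mem' := ⟨0, fun a ↦ by simp⟩
  smul_mem' := by
    rintro t φ ⟨c, hφ⟩
    exact ⟨t * c, fun a ↦ by rw [LinearMap.smul_apply, hφ, mul_smul]⟩
  lie_mem := by
    rintro x φ ⟨c, hφ⟩
    exact ⟨0, fun a ↦ by rw [lie_apply_eq_zero_of_apply_eq_smul hφ, zero_smul]⟩

variable {A}

theorem apply_eq_zero_of_mem_lie_top {χ : scalarOnIdeal A}
    (hχ : χ ∈ ⁅(⊤ : LieIdeal R L), (⊤ : LieSubmodule R L (scalarOnIdeal A))⁆) (a : A) :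
    (χ : L →ₗ[R] A) a = 0 := by
  rw [← LieSubmodule.mem_toSubmodule, LieSubmodule.lieIdeal_oper_eq_linear_span'] at hχ
  induction hχ using Submodule.span_induction with
  | mem χ h =>
    obtain ⟨x, -, ⟨φ, c, hφ⟩, -, rfl⟩ := h
    exact lie_apply_eq_zero_of_apply_eq_smul hφ x a
  | zero => rfl
  | add χ χ' _ _ h h' => simp [h, h']
  | smul t χ _ h => simp [h]

theorem lie_eq_zeroDifferential [IsLieAbelian A] {φ : L →ₗ[R] A} {c : R}
    (hφ : ∀ a : A, φ a = c • a) (a : A) : ⁅(a : L), φ⁆ = zeroDifferential R L A (c • a) := by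
  ext1 y
  have lie_eq_zero : ⁅(a : L), φ y⁆ = 0 := trivial_lie_zero A A a (φ y)
  have apply_lie : φ ⁅(a : L), y⁆ = - (c • ⁅y, a⁆) := by
    rw [← lie_skew, map_neg, ← LieSubmodule.coe_bracket, hφ]
  rw [LieHom.lie_apply, lie_eq_zero, apply_lie, zeroDifferential_apply, lie_smul, zero_sub, neg_neg]

end OneCochains

section Levi

variable {K L S : Type*} [Field K] [CharZero K] [LieRing L] [LieAlgebra K L]
  [FiniteDimensional K L] [LieRing S] [LieAlgebra K S] [HasTrivialRadical K S]

theorem exists_retraction_lie_eq {π : L →ₗ⁅K⁆ S} (hπ : Function.Surjective π)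
    [IsLieAbelian π.ker] :
    ∃ ψ : L →ₗ[K] π.ker, (∀ a : π.ker, ψ a = a) ∧ ∀ x : L, ∃ a : π.ker, ⁅x, ψ⁆ = ⁅(a : L), ψ⁆ := by
  have : FiniteDimensional K S := Module.Finite.of_surjective (π : L →ₗ[K] S) hπ
  let P := (zeroDifferential K L π.ker).range.comap (scalarOnIdeal π.ker).incl
  have lie_le : ⁅π.ker, (⊤ : LieSubmodule K L (scalarOnIdeal π.ker))⁆ ≤ P := by
    rw [LieSubmodule.lie_le_iff]
    rintro a ha ⟨φ, c, hφ⟩ -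
    exact ⟨c • ⟨a, ha⟩, (lie_eq_zeroDifferential hφ ⟨a, ha⟩).symm⟩
  obtain ⟨φ, hφ⟩ := π.ker.toSubmodule.subtype.exists_leftInverse_of_injective
    (Submodule.ker_subtype _)
  have φ_apply (a : π.ker) : φ a = a := LinearMap.congr_fun hφ a
  let φ₀ : scalarOnIdeal π.ker := ⟨φ, 1, fun a ↦ (φ_apply a).trans (one_smul K a).symm⟩
  have hmem : φ₀ ∈ P.normalizer ⊔ ⁅⊤, ⊤⁆ :=
    normalizer_sup_lie_top_eq_top hπ lie_le ▸ LieSubmodule.mem_top _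
  obtain ⟨ψ, hψ, χ, hχ, hψχ⟩ := LieSubmodule.mem_sup _ _ _ |>.mp hmem
  have ψ_apply (a : π.ker) : (ψ : L →ₗ[K] π.ker) a = a := by
    have : (ψ : L →ₗ[K] π.ker) a + (χ : L →ₗ[K] π.ker) a = φ a :=
      congrArg (fun ξ : scalarOnIdeal π.ker ↦ (ξ : L →ₗ[K] π.ker) a) hψχ
    rwa [apply_eq_zero_of_mem_lie_top hχ, add_zero, φ_apply] at this
  refine ⟨ψ, ψ_apply, fun x ↦ ?_⟩
  obtain ⟨a, ha⟩ := (LieSubmodule.mem_normalizer _ _).mp hψ x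
  refine ⟨a, ?_⟩
  rw [lie_eq_zeroDifferential (c := 1) fun b ↦ (ψ_apply b).trans (one_smul K b).symm, one_smul, ha]
  rfl

theorem exists_lieSubalgebra_ne_top_of_isLieAbelian_ker {π : L →ₗ⁅K⁆ S}
    (hπ : Function.Surjective π) [IsLieAbelian π.ker] (hker : π.ker ≠ ⊥) :
    ∃ T : LieSubalgebra K L, T ≠ ⊤ ∧ ∀ s, ∃ t ∈ T, π t = s := by
  obtain ⟨ψ, ψ_apply, hψ⟩ := exists_retraction_lie_eq hπ
  by_cases hstab : lieStabilizer K ψ = (⊤ : LieSubalgebra K L)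
  · let Ψ : L →ₗ⁅K, L⁆ π.ker :=
      { ψ with
        map_lie' := fun {x y} ↦ by
          have hx : ⁅x, ψ⁆ = 0 := mem_lieStabilizer.mp (hstab ▸ LieSubalgebra.mem_top x)
          have := LinearMap.congr_fun hx y
          rwa [LieHom.lie_apply, LinearMap.zero_apply, sub_eq_zero, eq_comm] at this }
    refine ⟨LieIdeal.toLieSubalgebra K L Ψ.ker, fun htop ↦ hker ?_, fun s ↦ ?_⟩
    · refine (LieSubmodule.eq_bot_iff _).mpr fun a ha ↦ ?_
      have hmem : a ∈ LieIdeal.toLieSubalgebra K L Ψ.ker := htop ▸ LieSubalgebra.mem_top a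
      have apply_eq_zero : ψ a = 0 := hmem
      exact congrArg Subtype.val ((ψ_apply ⟨a, ha⟩).symm.trans apply_eq_zero)
    · obtain ⟨x, rfl⟩ := hπ s
      refine ⟨x - ψ x, ?_, by rw [map_sub, LieHom.mem_ker.mp (ψ x).2, sub_zero]⟩
      change ψ (x - ψ x) = 0
      rw [map_sub, ψ_apply, sub_self]
  · refine ⟨lieStabilizer K ψ, hstab, fun s ↦ ?_⟩
    obtain ⟨x, rfl⟩ := hπ s
    obtain ⟨a, ha⟩ := hψ x
    refine ⟨x - a, ?_, by rw [map_sub, LieHom.mem_ker.mp a.2, sub_zero]⟩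
    rw [mem_lieStabilizer, sub_lie, ha, sub_self]

theorem exists_lieSubalgebra_ne_top_of_isSolvable_ker {π : L →ₗ⁅K⁆ S}
    (hπ : Function.Surjective π) [IsSolvable π.ker] (hker : π.ker ≠ ⊥) :
    ∃ T : LieSubalgebra K L, T ≠ ⊤ ∧ ∀ s, ∃ t ∈ T, π t = s := by
  let D : LieIdeal K L := ⁅π.ker, π.ker⁆
  have D_le : D ≤ π.ker := LieSubmodule.lie_le_left _ _
  obtain ⟨π', hπ'⟩ := exists_lieHom_comp_eq (quotientMk_surjective D) (f := π)
    ((ker_quotientMk D).trans_le D_le)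
  have π'_surjective : Function.Surjective π' := fun s ↦
    let ⟨x, hx⟩ := hπ s
    ⟨quotientMk D x, (hπ' x).trans hx⟩
  have quotientMk_mem (x : L) : quotientMk D x ∈ π'.ker ↔ x ∈ π.ker := by
    rw [LieHom.mem_ker, LieHom.mem_ker, hπ']
  have : IsLieAbelian π'.ker :=
    isLieAbelian_ker_of_lie_ker_le_ker (quotientMk_surjective D) hπ' (ker_quotientMk D).ge
  have π'_ker_ne_bot : π'.ker ≠ ⊥ := by
    intro h
    refine lie_self_ne_self_of_isSolvable hker (D_le.antisymm fun x hx ↦ ?_)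
    rw [← quotientMk_mem, h, LieSubmodule.mem_bot, ← LieHom.mem_ker, ker_quotientMk] at hx
    exact hx
  obtain ⟨T, T_ne_top, hT⟩ :=
    exists_lieSubalgebra_ne_top_of_isLieAbelian_ker π'_surjective π'_ker_ne_bot
  refine ⟨T.comap (quotientMk D), fun h ↦ T_ne_top ?_, fun s ↦ ?_⟩
  · refine eq_top_iff.mpr fun q _ ↦ ?_
    obtain ⟨x, rfl⟩ := quotientMk_surjective D q
    have : x ∈ T.comap (quotientMk D) := h ▸ LieSubalgebra.mem_top x
    exact this
  · obtain ⟨q, hq, rfl⟩ := hT s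
    obtain ⟨x, rfl⟩ := quotientMk_surjective D q
    exact ⟨x, hq, (hπ' x).symm⟩

theorem exists_lieHom_section_of_isSolvable_ker {π : L →ₗ⁅K⁆ S}
    (hπ : Function.Surjective π) [IsSolvable π.ker] :
    ∃ σ : S →ₗ⁅K⁆ L, ∀ s, π (σ s) = s := by
  obtain ⟨T, hT, hmin⟩ := (measure fun T : LieSubalgebra K L ↦ Module.finrank K T).wf.has_min
    {T | ∀ s, ∃ t ∈ T, π t = s} ⟨⊤, fun s ↦
      let ⟨x, hx⟩ := hπ s
      ⟨x, LieSubalgebra.mem_top x, hx⟩⟩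
  let πT : T →ₗ⁅K⁆ S := π.comp T.incl
  have πT_surjective : Function.Surjective πT := fun s ↦
    let ⟨t, ht, hts⟩ := hT s
    ⟨⟨t, ht⟩, hts⟩
  have : IsSolvable πT.ker := isSolvable_ker_comp_of_injective Subtype.val_injective π
  have πT_ker : πT.ker = ⊥ := by
    by_contra h
    obtain ⟨U, hU, hUS⟩ := exists_lieSubalgebra_ne_top_of_isSolvable_ker πT_surjective h
    refine hmin (U.map T.incl) (fun s ↦ ?_) ?_
    · obtain ⟨u, hu, rfl⟩ := hUS s
      exact ⟨u, ⟨u, hu, rfl⟩, rfl⟩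
    · change Module.finrank K (U.toSubmodule.map T.toSubmodule.subtype) < _
      rw [Submodule.finrank_map_subtype_eq]
      exact Submodule.finrank_lt fun htop ↦ hU (LieSubalgebra.toSubmodule_injective htop)
  let e : T ≃ₗ⁅K⁆ S := LieEquiv.ofBijective πT ⟨by rwa [← LieHom.ker_eq_bot], πT_surjective⟩
  exact ⟨T.incl.comp e.symm, e.apply_symm_apply⟩

end Levi

section TwoCocycles

set_option maxSynthPendingDepth 3

variable {R L : Type*} [CommRing R] [LieRing L] [LieAlgebra R L]

/-- The `L`-module of 2-cocycles on the ideal `I` with values in the trivial module `R`. -/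
def trivialTwoCocycles (I : LieIdeal R L) : LieSubmodule R L (I →ₗ[R] Module.Dual R I) where
  carrier := {f | f.IsAlt ∧ ∀ a b c : I, f ⁅a, b⁆ c - f ⁅a, c⁆ b + f ⁅b, c⁆ a = 0}
  add_mem' := by
    rintro f g ⟨f_alt, hf⟩ ⟨g_alt, hg⟩
    refine ⟨fun a ↦ by simp [f_alt.self_eq_zero, g_alt.self_eq_zero], fun a b c ↦ ?_⟩
    simp only [LinearMap.add_apply]
    linear_combination hf a b c + hg a b c
  zero_mem' := ⟨fun a ↦ rfl, fun a b c ↦ by simp⟩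
  smul_mem' := by
    rintro t f ⟨f_alt, hf⟩
    refine ⟨fun a ↦ by simp [f_alt.self_eq_zero], fun a b c ↦ ?_⟩
    simp only [LinearMap.smul_apply, smul_eq_mul]
    linear_combination t * hf a b c
  lie_mem := by
    rintro x f ⟨f_alt, hf⟩
    have lie_apply (a b : I) : ⁅x, f⁆ a b = - f a ⁅x, b⁆ - f ⁅x, a⁆ b := by
      rw [LieHom.lie_apply, LinearMap.sub_apply, Module.Dual.lie_apply]
    have lie_bracket (a b : I) : ⁅x, ⁅a, b⁆⁆ = ⁅⁅x, a⁆, b⁆ + ⁅a, ⁅x, b⁆⁆ :=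
      Subtype.ext (leibniz_lie x (a : L) (b : L))
    refine ⟨fun a ↦ by rw [lie_apply, f_alt.neg, sub_self], fun a b c ↦ ?_⟩
    simp only [lie_apply, lie_bracket, map_add, LinearMap.add_apply]
    linear_combination - hf ⁅x, a⁆ b c - hf a ⁅x, b⁆ c - hf a b ⁅x, c⁆

/-- The tautological 2-cocycle with values in the dual of the space of scalar 2-cocycles. Every
scalar 2-cocycle is obtained from it by an evaluation. -/
def universalTwoCocycle (I : LieIdeal R L) :
    I →ₗ[R] I →ₗ[R] Module.Dual R (trivialTwoCocycles I) :=
  LinearMap.mk₂ R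
    (fun a b ↦ LinearMap.applyₗ b ∘ₗ LinearMap.applyₗ a ∘ₗ
      (trivialTwoCocycles I).toSubmodule.subtype)
    (fun _ _ _ ↦ by ext; simp) (fun _ _ _ ↦ by ext; simp) (fun _ _ _ ↦ by ext; simp)
    (fun _ _ _ ↦ by ext; simp)

variable {I : LieIdeal R L}

theorem universalTwoCocycle_apply (a b : I) (f : trivialTwoCocycles I) :
    universalTwoCocycle I a b f = (f : I →ₗ[R] Module.Dual R I) a b := rfl

theorem isAlt_universalTwoCocycle : (universalTwoCocycle I).IsAlt :=
  fun a ↦ LinearMap.ext fun f ↦ f.2.1 a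

theorem universalTwoCocycle_cocycle (a b c : I) :
    universalTwoCocycle I ⁅a, b⁆ c - universalTwoCocycle I ⁅a, c⁆ b +
      universalTwoCocycle I ⁅b, c⁆ a = 0 :=
  LinearMap.ext fun f ↦ f.2.2 a b c

theorem lie_universalTwoCocycle (x : L) (a b : I) :
    ⁅x, universalTwoCocycle I a b⁆ =
      universalTwoCocycle I ⁅x, a⁆ b + universalTwoCocycle I a ⁅x, b⁆ := by
  ext f
  rw [Module.Dual.lie_apply, LinearMap.add_apply]
  simp only [universalTwoCocycle_apply, LieSubmodule.coe_bracket, LieHom.lie_apply,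
    LinearMap.sub_apply, Module.Dual.lie_apply]
  ring

end TwoCocycles

section SplitExtension

variable {R L S V : Type*} [CommRing R] [LieRing L] [LieAlgebra R L] [LieRing S] [LieAlgebra R S]
  [AddCommGroup V] [Module R V] [LieRingModule L V]
  {π : L →ₗ⁅R⁆ S} {σ : S →ₗ⁅R⁆ L} (hσ : ∀ s, π (σ s) = s)

/-- The projection onto the kernel of `π` along the image of a section `σ` of `π`. -/
def kerProjection : L →ₗ[R] π.ker :=
  (LinearMap.id - (σ : S →ₗ[R] L) ∘ₗ (π : L →ₗ[R] S)).codRestrict π.ker.toSubmodule fun x ↦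
    show π (x - σ (π x)) = 0 by rw [map_sub, hσ, sub_self]

theorem coe_kerProjection (x : L) : (kerProjection hσ x : L) = x - σ (π x) := rfl

theorem kerProjection_coe (a : π.ker) : kerProjection hσ a = a := by
  apply Subtype.ext
  rw [coe_kerProjection, LieHom.mem_ker.mp a.2, map_zero, sub_zero]

theorem kerProjection_lie (x y : L) :
    kerProjection hσ ⁅x, y⁆ = ⁅σ (π x), kerProjection hσ y⁆ - ⁅σ (π y), kerProjection hσ x⁆ +
      ⁅kerProjection hσ x, kerProjection hσ y⁆ := by
  apply Subtype.ext
  simp only [LieSubmodule.coe_add, LieSubmodule.coe_sub, LieSubmodule.coe_bracket,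
    coe_kerProjection, LieHom.map_lie, LieIdeal.coe_bracket_of_module, lie_sub, sub_lie]
  rw [← lie_skew (σ (π y)) x, ← lie_skew (σ (π y)) (σ (π x))]
  abel

theorem cocycle_kerProjection {q : π.ker →ₗ[R] π.ker →ₗ[R] V} (q_alt : q.IsAlt)
    (hq : ∀ a b c : π.ker, q ⁅a, b⁆ c - q ⁅a, c⁆ b + q ⁅b, c⁆ a = 0)
    (lie_q : ∀ (x : L) (a b : π.ker), ⁅x, q a b⁆ = q ⁅x, a⁆ b + q a ⁅x, b⁆) (x y z : L) :
    let F := q.compl₁₂ (kerProjection hσ) (kerProjection hσ)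
    ⁅σ (π x), F y z⁆ - ⁅σ (π y), F x z⁆ + ⁅σ (π z), F x y⁆
      - F ⁅x, y⁆ z + F ⁅x, z⁆ y - F ⁅y, z⁆ x = 0 := by
  set p := kerProjection hσ with hp
  simp only [LinearMap.compl₁₂_apply, lie_q, hp, kerProjection_lie, map_add, map_sub,
    LinearMap.add_apply, LinearMap.sub_apply]
  rw [← neg_eq_zero, ← hq (p x) (p y) (p z), ← q_alt.neg ⁅σ (π x), p z⁆ (p y),
    ← q_alt.neg ⁅σ (π y), p z⁆ (p x), ← q_alt.neg ⁅σ (π z), p y⁆ (p x)]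
  abel

end SplitExtension

section TwoTrivial

set_option maxSynthPendingDepth 3

variable {K : Type u} {L : Type v} [Field K] [LieRing L] [LieAlgebra K L]

-- `IsTwoTrivial` quantifies over modules in the universe of `K` only.
theorem IsTwoTrivial.exists_eq_of_cocycle (h : IsTwoTrivial K L) {V : Type*} [AddCommGroup V]
    [Module K V] [FiniteDimensional K V] (ρ : L →ₗ⁅K⁆ Module.End K V) {F : L →ₗ[K] L →ₗ[K] V}
    (F_alt : F.IsAlt)
    (hF : ∀ x y z, ρ x (F y z) - ρ y (F x z) + ρ z (F x y)
      - F ⁅x, y⁆ z + F ⁅x, z⁆ y - F ⁅y, z⁆ x = 0) :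
    ∃ g : L →ₗ[K] V, ∀ x y, F x y = ρ x (g y) - ρ y (g x) - g ⁅x, y⁆ := by
  let W := Fin (Module.finrank K V) → K
  let e : V ≃ₗ[K] W := (Module.finBasis K V).equivFun
  let ρ' : L →ₗ⁅K⁆ Module.End K W := e.lieConj.toLieHom.comp ρ
  let _ : LieRingModule L W := LieRingModule.compLieHom W ρ'
  have : LieModule K L W := LieModule.compLieHom W ρ'
  have lie_eq (x : L) (w : W) : ⁅x, w⁆ = e (ρ x (e.symm w)) := rfl
  obtain ⟨g, hg⟩ := h W (F.compr₂ e.toLinearMap)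
    ⟨fun x ↦ by simp [F_alt.self_eq_zero],
      fun x y z ↦ by simpa [lie_eq] using congrArg e (hF x y z)⟩
  exact ⟨e.symm.toLinearMap ∘ₗ g, fun x y ↦ by simpa [lie_eq] using congrArg e.symm (hg x y)⟩

variable {S : Type*} [LieRing S] [LieAlgebra K S] {π : L →ₗ⁅K⁆ S} {σ : S →ₗ⁅K⁆ L}

theorem IsTwoTrivial.exists_eq_apply_lie_of_equivariant (h : IsTwoTrivial K L)
    (hσ : ∀ s, π (σ s) = s) {V : Type*} [AddCommGroup V] [Module K V] [LieRingModule L V]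
    [LieModule K L V] [FiniteDimensional K V] {q : π.ker →ₗ[K] π.ker →ₗ[K] V} (q_alt : q.IsAlt)
    (hq : ∀ a b c : π.ker, q ⁅a, b⁆ c - q ⁅a, c⁆ b + q ⁅b, c⁆ a = 0)
    (lie_q : ∀ (x : L) (a b : π.ker), ⁅x, q a b⁆ = q ⁅x, a⁆ b + q a ⁅x, b⁆) :
    ∃ g : π.ker →ₗ[K] V, ∀ a b : π.ker, q a b = g ⁅a, b⁆ := by
  let ρ : L →ₗ⁅K⁆ Module.End K V := (toEnd K L V).comp (σ.comp π)
  have ρ_ker (a : π.ker) : ρ a = 0 := by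
    rw [LieHom.comp_apply, LieHom.comp_apply, LieHom.mem_ker.mp a.2, map_zero, map_zero]
  obtain ⟨g, hg⟩ := h.exists_eq_of_cocycle ρ (fun x ↦ q_alt (kerProjection hσ x))
    (cocycle_kerProjection hσ q_alt hq lie_q)
  refine ⟨- (g ∘ₗ π.ker.toSubmodule.subtype), fun a b ↦ ?_⟩
  have q_apply := hg a b
  rw [LinearMap.compl₁₂_apply, kerProjection_coe, kerProjection_coe, ρ_ker, ρ_ker,
    LinearMap.zero_apply, LinearMap.zero_apply, sub_zero, zero_sub] at q_apply
  exact q_apply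

theorem IsTwoTrivial.exists_eq_apply_lie [FiniteDimensional K L] (h : IsTwoTrivial K L)
    (hσ : ∀ s, π (σ s) = s) (f : π.ker →ₗ[K] π.ker →ₗ[K] K) (f_alt : f.IsAlt)
    (hf : ∀ a b c : π.ker, f ⁅a, b⁆ c - f ⁅a, c⁆ b + f ⁅b, c⁆ a = 0) :
    ∃ g : π.ker →ₗ[K] K, ∀ a b : π.ker, f a b = g ⁅a, b⁆ := by
  obtain ⟨g, hg⟩ := h.exists_eq_apply_lie_of_equivariant hσ isAlt_universalTwoCocycle
    universalTwoCocycle_cocycle lie_universalTwoCocycle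
  let f' : trivialTwoCocycles π.ker := ⟨f, f_alt, hf⟩
  exact ⟨LinearMap.applyₗ f' ∘ₗ g, fun a b ↦ LinearMap.congr_fun (hg a b) f'⟩

end TwoTrivial

/-- If `L` is a 2-trivial Lie algebra over a field of characteristic zero, then
`H²(Rad L, K) = 0` for the trivial one-dimensional module `K`: every alternating bilinear
2-cocycle on the solvable radical with trivial coefficients is a coboundary. -/
theorem radical_trivial_second_cohomology
    (K : Type u) (L : Type v) [Field K] [CharZero K]
    [LieRing L] [LieAlgebra K L] [FiniteDimensional K L]
    (h2 : IsTwoTrivial K L) :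
    ∀ f : ↥(LieAlgebra.radical K L) →ₗ[K] ↥(LieAlgebra.radical K L) →ₗ[K] K,
      (∀ a, f a a = 0) →
      (∀ x y z : ↥(LieAlgebra.radical K L), f ⁅x, y⁆ z - f ⁅x, z⁆ y + f ⁅y, z⁆ x = 0) →
      ∃ h : ↥(LieAlgebra.radical K L) →ₗ[K] K,
        ∀ x y : ↥(LieAlgebra.radical K L), f x y = h ⁅x, y⁆ := by
  have : IsSolvable (quotientMk (radical K L)).ker := by
    rw [ker_quotientMk]
    infer_instance
  obtain ⟨σ, hσ⟩ :=
    exists_lieHom_section_of_isSolvable_ker (quotientMk_surjective (radical K L))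
  have ker_cohomology := h2.exists_eq_apply_lie hσ
  rwa [ker_quotientMk] at ker_cohomology
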